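/- arXiv:1704.02407 — 2 statements merged into one kernel-verified Lean document; each statement's English description precedes it below -/
import Mathlib

section
/- There is an absolute constant C and an N such that for all n ≥ N, every finite abelian group G of order n, and every real H₀ with H₀ ≥ (log n)^{−100}, the number of characters χ ∈ Ĝ^n with entropy H(χ) ≤ H₀ is at most exp( H₀·n + C·H₀·n·log log n / log n ). -/
/-!
Group the functions `χ` by their *type*, the family `a` of fibre sizes. A type of entropy `H`
is shared by at most `n! / ∏ a! = exp (n H)` functions (`card_same_fiberCard_mul_le`), so it
suffices to bound the number of types of entropy at most `H₀` by
`exp (O(H₀ n log log n / log n))`.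

Let `m` be the number of points in fibres of size at most `√n`. Since
`n! / ∏ a! ≥ n (n-1) ⋯ (n-m+1) / ∏_{small} a! ≥ (n / (e √n))^m`, low entropy forces
`m ≤ 4 H₀ n / log n` (`small_mass_le_log`). Moreover at most `√n` fibres are larger than `√n`.

Such types are counted by a generating function (`card_mul_weight_le`): give a fibre size
`k ≤ √n` the weight `z^k` with `z = (log n)^{-102}`, and a larger one the weight `n^{-2}`. An
admissible type has weight at least `z^m n^{-2√n}`, whose inverse is of the required size, while
the total weight of all types is at most `exp (2 z n + O(1))`. The lower bound on `H₀` makes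
`z n` and `√n log n` negligible.
-/

open Finset

noncomputable section

/-- The Fourier coefficient `1̂_S(χ) = n^{-n} Σ'_{x₁,…,x_n distinct} χ₁(x₁)⋯χ_n(x_n)`,
where the sum is over tuples with pairwise distinct coordinates. -/
def hatS {G : Type} [AddCommGroup G] [Fintype G] {n : ℕ}
    (χ : Fin n → AddChar G ℂ) : ℂ := by
  classical exact
  (∑ x : Fin n → G, if Function.Injective x then ∏ i, χ i (x i) else 0) / (n : ℂ) ^ n

/-- The number of nontrivial coordinates of `χ ∈ Ĝ^n`. -/
def sparseCount {G : Type} [AddCommGroup G] [Fintype G] {n : ℕ}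
    (χ : Fin n → AddChar G ℂ) : ℕ := by
  classical exact (Finset.univ.filter (fun i => χ i ≠ 1)).card

/-- The finset of `m`-sparse characters in `Ĝ^n`. -/
def sparseSet (G : Type) [AddCommGroup G] [Fintype G] (n m : ℕ) :
    Finset (Fin n → AddChar G ℂ) := by
  classical exact Finset.univ.filter (fun χ => sparseCount χ = m)

/-- The number of preimages of `x` under `f`. -/
def fiberCard {α β : Type*} [Fintype α] (f : α → β) (x : β) : ℕ := by
  classical exact (Finset.univ.filter (fun i => f i = x)).card

end

/-- The entropy `H(χ) = (1/n)·log(n!/(a₁!⋯a_k!))`, where `a₁,…,a_k` are the multiplicities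
of the distinct values taken by the coordinates of `χ`. -/
noncomputable def entropyH {G : Type} [AddCommGroup G] [Fintype G] {n : ℕ}
    (χ : Fin n → AddChar G ℂ) : ℝ := by
  classical exact
  (1 / (n : ℝ)) * Real.log ((n.factorial : ℝ) /
    ∏ ψ ∈ Finset.univ.image χ, ((fiberCard χ ψ).factorial : ℝ))

theorem fiberCard_eq_card {α β : Type*} [Fintype α] (f : α → β) (x : β)
    [Fintype {i // f i = x}] : fiberCard f x = Fintype.card {i // f i = x} := by
  classical
  unfold fiberCard
  rw [← Fintype.card_subtype]

theorem sum_fiberCard {X : Type*} [Fintype X] {n : ℕ} (f : Fin n → X) :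
    ∑ x, fiberCard f x = n := by
  classical
  have h := Finset.card_eq_sum_card_fiberwise (s := (univ : Finset (Fin n)))
    (t := (univ : Finset X)) (f := f) (fun _ _ => by simp)
  rw [Finset.card_univ, Fintype.card_fin] at h
  refine Eq.trans ?_ h.symm
  refine Finset.sum_congr rfl fun x _ => ?_
  unfold fiberCard
  congr!

/-- The functions with the same fibre sizes as `f` number at most `n! / ∏ (fibre size)!`: sending
such a `g` together with a permutation `σ` fixing `f` to `τ_g` followed by `σ`, where
`f ∘ τ_g = g`, is injective into the permutations. -/
theorem card_same_fiberCard_mul_le {X : Type*} [Fintype X] {n : ℕ} (f : Fin n → X) :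
    Nat.card {g : Fin n → X // fiberCard g = fiberCard f} * ∏ x, (fiberCard f x).factorial
      ≤ n.factorial := by
  classical
  have hex : ∀ g : {g : Fin n → X // fiberCard g = fiberCard f},
      ∃ τ : Equiv.Perm (Fin n), f ∘ τ = g.1 := by
    rintro ⟨g, hg⟩
    have e : ∀ c, Nonempty ({a // g a = c} ≃ {b // f b = c}) := fun c => by
      refine ⟨Fintype.equivOfCardEq ?_⟩
      rw [← fiberCard_eq_card, ← fiberCard_eq_card, hg]
    exact ⟨Equiv.ofFiberEquiv fun c => (e c).some,
      funext fun a => Equiv.ofFiberEquiv_map (fun c => (e c).some) a⟩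
  choose τ hτ using hex
  have hst := DomMulAct.stabilizer_card f
  have hst' : ∏ x, (fiberCard f x).factorial =
      Fintype.card {σ : Equiv.Perm (Fin n) // f ∘ σ = f} := by
    rw [hst]
    exact Finset.prod_congr rfl fun x _ => by rw [fiberCard_eq_card]
  rw [hst', Nat.card_eq_fintype_card, ← Fintype.card_prod]
  have hp : Fintype.card (Equiv.Perm (Fin n)) = n.factorial := by
    rw [Fintype.card_perm, Fintype.card_fin]
  rw [← hp]
  refine Fintype.card_le_of_injective
    (fun p : {g : Fin n → X // fiberCard g = fiberCard f} ×
      {σ : Equiv.Perm (Fin n) // f ∘ σ = f} => (τ p.1).trans p.2.1) ?_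
  have key : ∀ p : {g : Fin n → X // fiberCard g = fiberCard f} ×
      {σ : Equiv.Perm (Fin n) // f ∘ σ = f}, f ∘ ((τ p.1).trans p.2.1) = p.1.1 := by
    intro p
    rw [← hτ p.1]
    funext i
    exact congrFun p.2.2 (τ p.1 i)
  intro p q hpq
  have h1 : p.1 = q.1 := by
    apply Subtype.ext
    rw [← key p, ← key q]
    exact congrArg (fun e : Equiv.Perm (Fin n) => f ∘ e) hpq
  refine Prod.ext h1 (Subtype.ext ?_)
  have h2 : (τ p.1).trans p.2.1 = (τ q.1).trans q.2.1 := hpq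
  rw [h1] at h2
  ext i
  have := congrArg (fun e : Equiv.Perm (Fin n) => (e ((τ q.1).symm i) : ℕ)) h2
  simpa using this

theorem pow_le_exp_mul_descFactorial (n m : ℕ) (h : m ≤ n) :
    (n : ℝ) ^ m ≤ Real.exp m * (n.descFactorial m : ℝ) := by
  induction n generalizing m with
  | zero => obtain rfl : m = 0 := by omega
            simp
  | succ n ih =>
    cases m with
    | zero => simp
    | succ m =>
      have hm : m ≤ n := by omega
      have ih' := ih m hm
      rw [Nat.succ_descFactorial_succ]
      -- the induction step costs `(1 + 1/n)^m ≤ e`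
      have h1 : ((n : ℝ) + 1) ^ m ≤ Real.exp 1 * (n : ℝ) ^ m := by
        rcases Nat.eq_zero_or_pos n with rfl | hn
        · obtain rfl : m = 0 := by omega
          simp
        have hn' : (0 : ℝ) < n := by exact_mod_cast hn
        have : ((n : ℝ) + 1) = (1 / n + 1) * n := by field_simp; ring
        rw [this, mul_pow]
        gcongr
        calc (1 / (n : ℝ) + 1) ^ m ≤ (Real.exp (1 / n)) ^ m := by
              gcongr; exact Real.add_one_le_exp _
          _ = Real.exp (m * (1 / n)) := (Real.exp_nat_mul _ _).symm
          _ ≤ Real.exp 1 := by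
              apply Real.exp_le_exp.2
              rw [mul_one_div]
              exact (div_le_one hn').2 (by exact_mod_cast hm)
      push_cast
      rw [Real.exp_add, pow_succ]
      calc ((n : ℝ) + 1) ^ m * (n + 1)
          ≤ (Real.exp 1 * (Real.exp m * (n.descFactorial m : ℝ))) * (n + 1) := by
            gcongr
            exact h1.trans (by gcongr)
        _ = _ := by ring

/-- If `m` points lie in the fibres of size at most `s`, the multinomial coefficient
is at least `(n / (e s))^m`. -/
theorem small_mass_le_multinomial {X : Type*} [Fintype X] {n : ℕ} (a : X → ℕ)
    (ha : ∑ x, a x = n) (s : ℕ) :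
    (n : ℝ) ^ (∑ x with a x ≤ s, a x) * ∏ x, ((a x).factorial : ℝ)
      ≤ (Real.exp 1 * s) ^ (∑ x with a x ≤ s, a x) * (n.factorial : ℝ) := by
  set m := ∑ x with a x ≤ s, a x with hm
  have hsplit : m + ∑ x with ¬ a x ≤ s, a x = n := by
    rw [hm, Finset.sum_filter_add_sum_filter_not, ha]
  have hmn : m ≤ n := by omega
  have hbig : ∏ x with ¬ a x ≤ s, (a x).factorial ≤ (n - m).factorial := by
    have : n - m = ∑ x with ¬ a x ≤ s, a x := by omega
    rw [this]
    exact Nat.le_of_dvd (Nat.factorial_pos _) (Nat.prod_factorial_dvd_factorial_sum _ _)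
  have hsmall : ∏ x with a x ≤ s, (a x).factorial ≤ s ^ m := by
    rw [hm, ← Finset.prod_pow_eq_pow_sum]
    refine Finset.prod_le_prod' fun x hx => ?_
    exact (Nat.factorial_le_pow _).trans (Nat.pow_le_pow_left (Finset.mem_filter.1 hx).2 _)
  have hprod : ∏ x, (a x).factorial ≤ s ^ m * (n - m).factorial := by
    rw [← Finset.prod_filter_mul_prod_filter_not _ (fun x => a x ≤ s)]
    exact Nat.mul_le_mul hsmall hbig
  have hprod' : ∏ x, ((a x).factorial : ℝ) ≤ (s : ℝ) ^ m * ((n - m).factorial : ℝ) := by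
    exact_mod_cast hprod
  have hd : ((n - m).factorial : ℝ) * (n.descFactorial m : ℝ) = n.factorial := by
    exact_mod_cast Nat.factorial_mul_descFactorial hmn
  calc (n : ℝ) ^ m * ∏ x, ((a x).factorial : ℝ)
      ≤ (Real.exp m * (n.descFactorial m : ℝ)) * ((s : ℝ) ^ m * ((n - m).factorial : ℝ)) := by
        gcongr
        exact pow_le_exp_mul_descFactorial n m hmn
    _ = (Real.exp 1 * s) ^ m * (n.factorial : ℝ) := by
        rw [← hd, mul_pow, ← Real.exp_nat_mul, mul_one]; ring

/-- The points in the fibres of size at most `√n` number at most `4 / log n` times the logarithm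
of the multinomial coefficient. -/
theorem small_mass_le_log {X : Type*} [Fintype X] {n : ℕ} (a : X → ℕ)
    (ha : ∑ x, a x = n) (hn : 4 ≤ Real.log n) :
    ((∑ x with a x ≤ n.sqrt, a x : ℕ) : ℝ) * (Real.log n / 4)
      ≤ Real.log ((n.factorial : ℝ) / ∏ x, ((a x).factorial : ℝ)) := by
  have h := small_mass_le_multinomial a ha n.sqrt
  set m := ∑ x with a x ≤ n.sqrt, a x
  have hn0 : 0 < n := by
    rcases Nat.eq_zero_or_pos n with rfl | h
    · norm_num at hn
    · exact h
  have hnR : (0 : ℝ) < n := by exact_mod_cast hn0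
  have hs0 : (0 : ℝ) < n.sqrt := by exact_mod_cast Nat.sqrt_pos.2 hn0
  have hP : 0 < ∏ x, ((a x).factorial : ℝ) :=
    Finset.prod_pos fun x _ => by exact_mod_cast Nat.factorial_pos _
  have hF : (0 : ℝ) < n.factorial := by exact_mod_cast Nat.factorial_pos _
  have hl := Real.log_le_log (by positivity) h
  rw [Real.log_mul (by positivity) hP.ne', Real.log_mul (by positivity) hF.ne', Real.log_pow,
    Real.log_pow, Real.log_mul (by positivity) hs0.ne', Real.log_exp] at hl
  rw [Real.log_div hF.ne' hP.ne']
  have hs : Real.log n.sqrt ≤ Real.log n / 2 := by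
    have h2 : ((n.sqrt : ℝ)) ^ 2 ≤ n := by exact_mod_cast Nat.sqrt_le' n
    have := Real.log_le_log (by positivity) h2
    rw [Real.log_pow] at this
    push_cast at this
    linarith
  have hm : (m : ℝ) * (1 + Real.log n.sqrt) ≤ m * (Real.log n - Real.log n / 4) := by
    gcongr
    linarith
  linarith

theorem card_large_le {X : Type*} [Fintype X] {n : ℕ} (a : X → ℕ) (ha : ∑ x, a x = n) :
    #{x | ¬ a x ≤ n.sqrt} ≤ n.sqrt := by
  by_contra hc
  rw [not_le] at hc
  have h1 : #{x | ¬ a x ≤ n.sqrt} * (n.sqrt + 1) ≤ n := by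
    calc #{x | ¬ a x ≤ n.sqrt} * (n.sqrt + 1) ≤ ∑ x with ¬ a x ≤ n.sqrt, a x := by
          rw [← smul_eq_mul]
          refine Finset.card_nsmul_le_sum _ _ _ fun x hx => ?_
          have := (Finset.mem_filter.1 hx).2
          omega
      _ ≤ ∑ x, a x := Finset.sum_le_sum_of_subset (Finset.filter_subset _ _)
      _ = n := ha
  have h2 := Nat.lt_succ_sqrt n
  have h3 : (n.sqrt + 1) * (n.sqrt + 1) ≤ #{x | ¬ a x ≤ n.sqrt} * (n.sqrt + 1) :=
    Nat.mul_le_mul_right _ hc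
  simp only [Nat.succ_eq_add_one] at h2
  omega

/-- Generating-function bound: a value `k ≤ s` gets weight `z^k` and a larger one weight `y`, so
each of the `n` coordinates contributes a total weight at most `1/(1-z) + (n+1) y`. -/
theorem card_mul_weight_le {X : Type*} [Fintype X] {n : ℕ} (hX : Fintype.card X = n)
    (s : ℕ) (z y B : ℝ) (hz0 : 0 < z) (hz : z ≤ 1 / 2) (hy : 0 ≤ y)
    (T : Finset (X → ℕ)) (hT : ∀ a ∈ T, ∀ x, a x ≤ n)
    (hB : ∀ a ∈ T, B ≤ z ^ (∑ x with a x ≤ s, a x) * y ^ #{x | ¬ a x ≤ s}) :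
    (#T : ℝ) * B ≤ Real.exp (n * (2 * z + (n + 1) * y)) := by
  classical
  let w : ℕ → ℝ := fun k => if k ≤ s then z ^ k else y
  have hw0 : ∀ k, 0 ≤ w k := fun k => by
    simp only [w]; split_ifs <;> positivity
  have hW : ∀ a : X → ℕ, ∏ x, w (a x) =
      z ^ (∑ x with a x ≤ s, a x) * y ^ #{x | ¬ a x ≤ s} := fun a => by
    simp only [w]
    rw [Finset.prod_ite, Finset.prod_pow_eq_pow_sum, Finset.prod_const]
  have hw : ∑ k ∈ range (n + 1), w k ≤ Real.exp (2 * z + (n + 1) * y) := by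
    have hgeo : ∑ k ∈ range (n + 1), z ^ k ≤ 1 + 2 * z := by
      have h1 : ∑ k ∈ range (n + 1), z ^ k ≤ (1 - z)⁻¹ := by
        rw [← tsum_geometric_of_lt_one hz0.le (by linarith)]
        exact (summable_geometric_of_lt_one hz0.le (by linarith)).sum_le_tsum _
          fun k _ => by positivity
      refine h1.trans ?_
      rw [inv_le_iff_one_le_mul₀ (by linarith)]
      nlinarith
    have h2 : ∑ k ∈ range (n + 1), w k ≤ ∑ k ∈ range (n + 1), (z ^ k + y) := by
      refine Finset.sum_le_sum fun k _ => ?_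
      have : 0 ≤ z ^ k := by positivity
      simp only [w]
      split_ifs <;> linarith
    rw [Finset.sum_add_distrib, Finset.sum_const, Finset.card_range, nsmul_eq_mul] at h2
    push_cast at h2
    have := Real.add_one_le_exp (2 * z + (n + 1) * y)
    linarith
  calc (#T : ℝ) * B ≤ ∑ a ∈ T, ∏ x, w (a x) := by
        rw [← nsmul_eq_mul]
        exact Finset.card_nsmul_le_sum _ _ _ fun a ha => by rw [hW]; exact hB a ha
    _ ≤ ∑ a ∈ Fintype.piFinset fun _ : X => range (n + 1), ∏ x, w (a x) := by
        refine Finset.sum_le_sum_of_subset_of_nonneg (fun a ha => ?_)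
          fun a _ _ => Finset.prod_nonneg fun x _ => hw0 _
        rw [Fintype.mem_piFinset]
        intro x
        rw [Finset.mem_range]
        have := hT a ha x
        omega
    _ = ∏ _x : X, ∑ k ∈ range (n + 1), w k :=
        (Finset.prod_univ_sum (fun _ => range (n + 1)) fun _ k => w k).symm
    _ ≤ ∏ _x : X, Real.exp (2 * z + (n + 1) * y) :=
        Finset.prod_le_prod (fun _ _ => Finset.sum_nonneg fun k _ => hw0 k) fun _ _ => hw
    _ = Real.exp (n * (2 * z + (n + 1) * y)) := by
        rw [Finset.prod_const, Finset.card_univ, hX, ← Real.exp_nat_mul]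

theorem mul_entropyH {G : Type} [AddCommGroup G] [Fintype G] {n : ℕ} (hn : 0 < n)
    [Fintype (AddChar G ℂ)] (χ : Fin n → AddChar G ℂ) :
    n * entropyH χ =
      Real.log ((n.factorial : ℝ) / ∏ ψ, ((fiberCard χ ψ).factorial : ℝ)) := by
  classical
  have hn' : (n : ℝ) ≠ 0 := by exact_mod_cast hn.ne'
  unfold entropyH
  rw [← mul_assoc, mul_one_div_cancel hn', one_mul]
  congr 2
  refine Finset.prod_subset_one_on_sdiff (Finset.subset_univ _) (fun ψ hψ => ?_) fun _ _ => rfl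
  have h0 : fiberCard χ ψ = 0 := by
    unfold fiberCard
    rw [Finset.card_eq_zero, Finset.filter_eq_empty_iff]
    intro i _ hi
    exact (Finset.mem_sdiff.1 hψ).2 (Finset.mem_image.2 ⟨i, Finset.mem_univ _, hi⟩)
  rw [h0]
  simp

/-- The size conditions on `n` used in the final estimate. -/
theorem eventually_large : ∃ N : ℕ, ∀ n : ℕ, N ≤ n → 4 ≤ Real.log n ∧
    1 ≤ Real.log (Real.log n) ∧ Real.log n ^ 102 ≤ Real.sqrt n := by
  have hl : Filter.Tendsto (fun n : ℕ => Real.log n) Filter.atTop Filter.atTop :=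
    Real.tendsto_log_atTop.comp tendsto_natCast_atTop_atTop
  have h1 := hl.eventually_ge_atTop 4
  have h2 := (Real.tendsto_log_atTop.comp hl).eventually_ge_atTop 1
  have h3 : ∀ᶠ n : ℕ in Filter.atTop, Real.log n ^ 102 ≤ Real.sqrt n := by
    have ho := isLittleO_log_rpow_rpow_atTop (102 : ℝ) (s := 1 / 2) (by norm_num)
    have hb := ho.bound (c := 1) one_pos
    filter_upwards [tendsto_natCast_atTop_atTop.eventually hb, h1] with n hn h4
    rw [one_mul, Real.norm_eq_abs, Real.norm_eq_abs, ← Real.sqrt_eq_rpow,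
      abs_of_nonneg (Real.sqrt_nonneg _), abs_of_nonneg (by positivity)] at hn
    exact_mod_cast hn
  obtain ⟨N, hN⟩ := Filter.eventually_atTop.1 ((h1.and h2).and h3)
  exact ⟨N, fun n hn => ⟨(hN n hn).1.1, (hN n hn).1.2, (hN n hn).2⟩⟩

/-- There are constants `C` and `N` such that for all `n ≥ N`, every finite abelian group
`G` of order `n`, and every `H₀ ≥ (log n)^{−100}`, the number of `χ ∈ Ĝ^n` with entropy at
most `H₀` is at most `exp(H₀·n + C·H₀·n·log log n / log n)`. -/
theorem low_entropy_character_count :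
    ∃ C : ℝ, ∃ N : ℕ, ∀ n : ℕ, N ≤ n →
      ∀ (G : Type) [AddCommGroup G] [Fintype G], Fintype.card G = n →
      ∀ H₀ : ℝ, ((Real.log n) ^ 100)⁻¹ ≤ H₀ →
      (Nat.card {χ : Fin n → AddChar G ℂ // entropyH χ ≤ H₀} : ℝ)
        ≤ Real.exp (H₀ * n + C * H₀ * n * Real.log (Real.log n) / Real.log n) := by
  obtain ⟨N, hN⟩ := eventually_large
  refine ⟨420, N, fun n hn G _ _ hG H₀ hH => ?_⟩
  obtain ⟨h4, hll, hsq⟩ := hN n hn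
  classical
  have hX : Fintype.card (AddChar G ℂ) = n := by rw [AddChar.card_eq, hG]
  set l := Real.log n with hl
  have hl0 : 0 < l := by linarith
  have hn0 : 0 < n := by
    rcases Nat.eq_zero_or_pos n with rfl | h
    · norm_num [hl] at h4
    · exact h
  have hnR : (0 : ℝ) < n := by exact_mod_cast hn0
  have hH0 : 0 < H₀ := lt_of_lt_of_le (by positivity) hH
  let S : Finset (Fin n → AddChar G ℂ) := univ.filter fun χ => entropyH χ ≤ H₀
  have hS : Nat.card {χ : Fin n → AddChar G ℂ // entropyH χ ≤ H₀} = #S := by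
    rw [Nat.card_eq_fintype_card, Fintype.card_subtype]
  let T : Finset (AddChar G ℂ → ℕ) := S.image fiberCard
  -- each type contributes at most `exp (n H₀)` functions
  have hfib : (#S : ℝ) ≤ #T * Real.exp (H₀ * n) := by
    rw [Finset.card_eq_sum_card_image (fiberCard : (Fin n → AddChar G ℂ) → _) S, Nat.cast_sum,
      ← nsmul_eq_mul]
    refine Finset.sum_le_card_nsmul _ _ _ fun a ha => ?_
    obtain ⟨f, hf, rfl⟩ := Finset.mem_image.1 ha
    have hP : 0 < ∏ ψ, ((fiberCard f ψ).factorial : ℝ) :=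
      Finset.prod_pos fun x _ => by exact_mod_cast Nat.factorial_pos _
    have h1 : (#{g ∈ S | fiberCard g = fiberCard f} : ℝ) * ∏ ψ, ((fiberCard f ψ).factorial : ℝ)
        ≤ n.factorial := by
      have h2 := card_same_fiberCard_mul_le f
      rw [Nat.card_eq_fintype_card, Fintype.card_subtype] at h2
      have h3 : #{g ∈ S | fiberCard g = fiberCard f} ≤
          #{g : Fin n → AddChar G ℂ | fiberCard g = fiberCard f} :=
        Finset.card_le_card (Finset.filter_subset_filter _ (Finset.subset_univ _))
      exact_mod_cast (Nat.mul_le_mul_right _ h3).trans h2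
    rw [← le_div_iff₀ hP] at h1
    refine h1.trans ?_
    rw [← Real.log_le_iff_le_exp (div_pos (by exact_mod_cast Nat.factorial_pos _) hP),
      ← mul_entropyH hn0 f, mul_comm]
    gcongr
    exact (Finset.mem_filter.1 hf).2
  set Q := H₀ * n * Real.log l / l with hQ
  -- an admissible type has weight at least `exp (-(408 Q + 2 l √n))` for `z = l⁻¹⁰²`, `y = n⁻²`
  have hT : (#T : ℝ) * Real.exp (-(408 * Q + 2 * l * n.sqrt)) ≤
      Real.exp (n * (2 * (l ^ 102)⁻¹ + (n + 1) * ((n : ℝ) ^ 2)⁻¹)) := by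
    refine card_mul_weight_le hX n.sqrt _ _ _ (by positivity) ?_ (by positivity) T ?_ ?_
    · rw [one_div]
      apply inv_anti₀ two_pos
      calc (2 : ℝ) ≤ l ^ 1 := by linarith
        _ ≤ l ^ 102 := pow_le_pow_right₀ (by linarith) (by norm_num)
    · intro a ha x
      obtain ⟨f, hf, rfl⟩ := Finset.mem_image.1 ha
      conv_rhs => rw [← sum_fiberCard f]
      exact Finset.single_le_sum (f := fiberCard f) (fun _ _ => Nat.zero_le _) (Finset.mem_univ x)
    · intro a ha
      obtain ⟨f, hf, rfl⟩ := Finset.mem_image.1 ha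
      have hm := small_mass_le_log (fiberCard f) (sum_fiberCard f) h4
      have hc := card_large_le (fiberCard f) (sum_fiberCard f)
      rw [← mul_entropyH hn0 f] at hm
      set m := ∑ x with fiberCard f x ≤ n.sqrt, fiberCard f x
      set c := #{x | ¬ fiberCard f x ≤ n.sqrt}
      have hm' : (m : ℝ) ≤ 4 * (H₀ * n / l) := by
        have h5 : n * entropyH f ≤ n * H₀ := by
          gcongr
          exact (Finset.mem_filter.1 hf).2
        rw [mul_div_assoc', le_div_iff₀ hl0]
        linarith
      have hz : ((l ^ 102)⁻¹) ^ m = Real.exp (-(102 * Real.log l * m)) := by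
        rw [← Real.exp_log (show 0 < ((l ^ 102)⁻¹) ^ m by positivity), Real.log_pow, Real.log_inv,
          Real.log_pow]
        congr 1
        push_cast
        ring
      have hy : (((n : ℝ) ^ 2)⁻¹) ^ c = Real.exp (-(2 * l * c)) := by
        rw [← Real.exp_log (show 0 < (((n : ℝ) ^ 2)⁻¹) ^ c by positivity), Real.log_pow,
          Real.log_inv, Real.log_pow]
        congr 1
        push_cast
        ring
      rw [hz, hy, ← Real.exp_add]
      apply Real.exp_le_exp.2
      have e1 : 102 * Real.log l * m ≤ 408 * Q := by
        calc 102 * Real.log l * m ≤ 102 * Real.log l * (4 * (H₀ * n / l)) := by gcongr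
          _ = 408 * Q := by rw [hQ]; ring
      have e2 : 2 * l * c ≤ 2 * l * n.sqrt := by gcongr
      linarith
  -- `Q` dominates `n / (log n)^101`, hence all the error terms
  have hQn : n * (l ^ 101)⁻¹ ≤ Q := by
    have : n * (l ^ 101)⁻¹ = (l ^ 100)⁻¹ * n * 1 / l := by
      field_simp
    rw [this, hQ]
    gcongr
  have hzQ : n * (l ^ 102)⁻¹ ≤ Q := by
    refine le_trans ?_ hQn
    gcongr
    · linarith
    · norm_num
  have hsQ : l * n.sqrt ≤ Q := by
    refine le_trans ?_ hQn
    have h6 : (n.sqrt : ℝ) ≤ Real.sqrt n := Real.nat_sqrt_le_real_sqrt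
    rw [← div_eq_mul_inv, le_div_iff₀ (by positivity)]
    calc l * n.sqrt * l ^ 101 = n.sqrt * l ^ 102 := by ring
      _ ≤ Real.sqrt n * Real.sqrt n := by gcongr
      _ = n := Real.mul_self_sqrt hnR.le
  have h1Q : 1 ≤ Q := by
    refine le_trans ?_ hsQ
    have : (1 : ℝ) ≤ n.sqrt := by exact_mod_cast Nat.sqrt_pos.2 hn0
    nlinarith
  have hyQ : n * ((n + 1) * ((n : ℝ) ^ 2)⁻¹) ≤ 2 * Q := by
    have : n * ((n + 1) * ((n : ℝ) ^ 2)⁻¹) = 1 + 1 / n := by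
      field_simp
    have h7 : 1 / (n : ℝ) ≤ 1 := by
      rw [div_le_one hnR]
      exact_mod_cast hn0
    linarith
  have hT' : (#T : ℝ) ≤ Real.exp (420 * Q) := by
    rw [Real.exp_neg, ← div_eq_mul_inv, div_le_iff₀ (Real.exp_pos _), ← Real.exp_add] at hT
    refine hT.trans (Real.exp_le_exp.2 ?_)
    linarith
  rw [hS]
  calc (#S : ℝ) ≤ #T * Real.exp (H₀ * n) := hfib
    _ ≤ Real.exp (420 * Q) * Real.exp (H₀ * n) := by gcongr
    _ = _ := by
      rw [← Real.exp_add, hQ]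
      congr 1
      ring
end

section
/- Let G be a finite abelian group of order n, let 1 ≤ m ≤ n, and let χ = (χ₁,…,χ_m, 0,…,0) ∈ Ĝ^n with each of χ₁,…,χ_m nontrivial. Then 1̂_S(χ) = −(1/(n−m+1)) Σ_{i=1}^{m−1} 1̂_S(χ^i), where χ^i = (χ₁,…,χ_{i−1}, χ_i + χ_m, χ_{i+1},…,χ_{m−1}, 0,…,0) ∈ Ĝ^n is obtained from χ by replacing the i-th coordinate with χ_i + χ_m and the m-th coordinate with the trivial character. -/
/-!
If `ψ` is a nontrivial character and `x` enumerates `G`, then `∑ k, ψ (x k) = ∑ y, ψ y = 0`.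
Multiplying by `∏ i, η i (x i)` and summing over all enumerations `x` shows that the coefficients
of the characters obtained from `η` by multiplying one coordinate by `ψ` sum to zero
(`sum_hatS_mul_single`). Apply this with `ψ = χ_m` and `η` equal to `χ` with its `m`-th coordinate
made trivial. Multiplying coordinate `k < m` yields `χ^k`; multiplying coordinate `k ≥ m` yields
a permutation of `χ`, because `η` is trivial there, so each of these `n - m + 1` coordinates
contributes `1̂_S(χ)` (`hatS_comp_perm`).
-/


open Finset

/-- The set of bijections is invariant under permuting coordinates, so the Fourier coefficient is
a symmetric function of the characters. -/
lemma hatS_comp_perm {G : Type} [AddCommGroup G] [Fintype G] {n : ℕ}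
    (χ : Fin n → AddChar G ℂ) (σ : Equiv.Perm (Fin n)) :
    hatS (fun i => χ (σ i)) = hatS χ := by
  classical
  unfold hatS
  congr 1
  refine Fintype.sum_equiv (Equiv.arrowCongr σ (Equiv.refl G)) _ _ fun x => ?_
  have hx : (Equiv.arrowCongr σ (Equiv.refl G)) x = x ∘ σ.symm := rfl
  rw [hx]
  have hinj : Function.Injective (x ∘ σ.symm) ↔ Function.Injective x :=
    σ.symm.injective_comp x
  simp only [hinj]
  split_ifs
  · exact Fintype.prod_equiv σ _ _ fun i => by simp
  · rfl

/-- Orthogonality of `ψ` with the trivial character, averaged over all enumerations of `G`. -/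
lemma sum_hatS_mul_single {G : Type} [AddCommGroup G] [Fintype G] {n : ℕ}
    (hcard : Fintype.card G = n) (η : Fin n → AddChar G ℂ) (ψ : AddChar G ℂ) (hψ : ψ ≠ 1) :
    ∑ k : Fin n, hatS (fun j : Fin n => η j * if (j : ℕ) = k then ψ else 1) = 0 := by
  classical
  unfold hatS
  rw [← Finset.sum_div, Finset.sum_comm]
  refine div_eq_zero_iff.mpr (Or.inl (Finset.sum_eq_zero fun x _ => ?_))
  split_ifs with hx
  · have hbij : Function.Bijective x :=
      (Fintype.bijective_iff_injective_and_card x).mpr ⟨hx, by simp [hcard]⟩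
    have hterm : ∀ k : Fin n, ∏ j : Fin n, (η j * if (j : ℕ) = k then ψ else 1) (x j)
        = (∏ j, η j (x j)) * ψ (x k) := by
      intro k
      simp only [AddChar.mul_apply, Finset.prod_mul_distrib]
      congr 1
      rw [Finset.prod_eq_single k]
      · simp
      · intro j _ hj
        simp [Fin.val_ne_of_ne hj]
      · simp
    simp only [hterm]
    rw [← Finset.mul_sum, hbij.sum_comp (fun y => ψ y),
      AddChar.sum_eq_zero_of_ne_one hψ, mul_zero]
  · simp

/-- The recursion: if `χ = (χ₁,…,χ_m,0,…,0) ∈ Ĝ^n` with `χ₁,…,χ_m` nontrivial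
(in 0-indexed form: coordinates `0,…,m−1` are nontrivial and the rest are trivial), then
`1̂_S(χ) = −(1/(n−m+1)) Σ_{i<m−1} 1̂_S(χ^i)`, where `χ^i` is obtained from `χ` by replacing
the `i`-th coordinate with `χ_i + χ_m` (multiplicatively: `χ_i · χ_m`) and the last
nontrivial coordinate with the trivial character. -/
theorem hatS_recursion
    (n m : ℕ) (hm : 1 ≤ m) (hmn : m ≤ n)
    (G : Type) [AddCommGroup G] [Fintype G] (hcard : Fintype.card G = n)
    (χ : Fin n → AddChar G ℂ)
    (hsupp : ∀ i : Fin n, (i : ℕ) < m ↔ χ i ≠ 1) :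
    hatS χ = -(1 / ((n : ℂ) - (m : ℂ) + 1)) * ∑ i ∈ Finset.range (m - 1),
      hatS (fun j : Fin n =>
        if (j : ℕ) = i then χ j * χ ⟨m - 1, by omega⟩
        else if (j : ℕ) = m - 1 then 1 else χ j) := by
  set p : Fin n := ⟨m - 1, by omega⟩ with hp
  have hpv : (p : ℕ) = m - 1 := rfl
  have hψ : χ p ≠ 1 := (hsupp p).mp (by omega)
  have htriv : ∀ j : Fin n, m ≤ (j : ℕ) → χ j = 1 := fun j hj => by
    by_contra h
    exact absurd ((hsupp j).mpr h) (by omega)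
  set F : ℕ → ℂ := fun k => hatS (fun j : Fin n =>
    (if j = p then 1 else χ j) * if (j : ℕ) = k then χ p else 1) with hF
  have hzero : ∑ k ∈ Finset.range n, F k = 0 := by
    rw [← Fin.sum_univ_eq_sum_range]
    exact sum_hatS_mul_single hcard (fun j => if j = p then 1 else χ j) (χ p) hψ
  have hlow : ∀ i ∈ Finset.range (m - 1), hatS (fun j : Fin n =>
      if (j : ℕ) = i then χ j * χ p else if (j : ℕ) = m - 1 then 1 else χ j) = F i := by
    intro i hi
    rw [Finset.mem_range] at hi
    refine congrArg hatS (funext fun j => ?_)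
    have hjp : j = p ↔ (j : ℕ) = m - 1 := by rw [Fin.ext_iff]
    by_cases h1 : (j : ℕ) = i
    · have h2 : (j : ℕ) ≠ m - 1 := by omega
      simp only [h1, hjp] at *
      simp [h2]
    · simp [h1, hjp]
  have hhigh : ∀ k ∈ Finset.Ico (m - 1) n, F k = hatS χ := by
    intro k hk
    rw [Finset.mem_Ico] at hk
    rw [← hatS_comp_perm χ (Equiv.swap p ⟨k, hk.2⟩)]
    refine congrArg hatS (funext fun j => ?_)
    by_cases h1 : j = ⟨k, hk.2⟩
    · subst h1
      -- `k = m - 1` is the position of `p` itself; otherwise `χ` is trivial at `k`.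
      rcases eq_or_lt_of_le hk.1 with h | h
      · have h2 : (⟨k, hk.2⟩ : Fin n) = p := Fin.ext h.symm
        simp [h2]
      · simp [htriv ⟨k, hk.2⟩ (by simp only; omega)]
    · have h1v : (j : ℕ) ≠ k := fun h => h1 (Fin.ext h)
      by_cases h2 : j = p
      · subst h2
        have h3 : m ≤ k := by omega
        simp [h1v, htriv ⟨k, hk.2⟩ h3]
      · simp [h1v, h2, Equiv.swap_apply_of_ne_of_ne h2 h1]
  rw [Finset.sum_congr rfl hlow]
  rw [← Finset.sum_range_add_sum_Ico F (show m - 1 ≤ n by omega), Finset.sum_congr rfl hhigh,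
    Finset.sum_const, Nat.card_Ico, nsmul_eq_mul] at hzero
  have hcount : ((n - (m - 1) : ℕ) : ℂ) = (n : ℂ) - m + 1 := by
    rw [Nat.cast_sub (by omega), Nat.cast_sub hm]
    push_cast
    ring
  have hne : (n : ℂ) - m + 1 ≠ 0 := by
    rw [← hcount, Nat.cast_ne_zero]
    omega
  rw [hcount] at hzero
  field_simp
  linear_combination hzero
end
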